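/- Let g : [0,1] × ℝ → ℝⁿ be continuous, 1-periodic in the second variable, and suppose the partial derivative ∂ₓg exists and is continuous on [0,1] × ℝ. Then for all x ∈ [0,1] and ε > 0, ‖∫₀ˣ (g(y, y/ε) − ∫₀¹ g(y, z) dz) dy‖ ≤ 2ε(‖g‖_* + ‖∂ₓg‖_*). -/

import Mathlib

open Set

/-!
Write `f y z = g y (z / ε) - ⨍ g y`, which is periodic in `z` with period `P = T * ε` and has mean
zero over each period; the integrand is its diagonal `f y y`. On a window `[c, c + P]` the integral
of the frozen function `f c` vanishes, and replacing `f y y` by `f c y` changes the integrand by at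
most `K * P`, where `K` is the Lipschitz constant of `f` in the first variable. So a window
contributes at most `K * P * P`, and since at most `(b - a) / P` disjoint windows fit into `[a, b]`,
they contribute `K * P * (b - a)` together. The incomplete window that remains contributes at most
`P * sup ‖f‖`.
-/

open MeasureTheory NNReal

section Average

variable {E : Type*} [NormedAddCommGroup E] [NormedSpace ℝ E]

theorem norm_intervalAverage_le_of_norm_le_const {f : ℝ → E} {a b C : ℝ} (hC : 0 ≤ C)
    (hf : ∀ x ∈ uIoc a b, ‖f x‖ ≤ C) : ‖⨍ x in a..b, f x‖ ≤ C := by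
  rw [interval_average_eq, norm_smul, norm_inv, Real.norm_eq_abs]
  exact inv_mul_le_of_le_mul₀ (abs_nonneg _) hC
    ((intervalIntegral.norm_integral_le_of_norm_le_const hf).trans_eq (mul_comm _ _))

theorem intervalAverage_sub {f g : ℝ → E} {a b : ℝ} (hf : IntervalIntegrable f volume a b)
    (hg : IntervalIntegrable g volume a b) :
    ⨍ x in a..b, (f x - g x) = (⨍ x in a..b, f x) - ⨍ x in a..b, g x := by
  simp only [interval_average_eq, intervalIntegral.integral_sub hf hg, smul_sub]

theorem integral_sub_intervalAverage [CompleteSpace E] (f : ℝ → E) (a b : ℝ) :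
    ∫ x in a..b, (f x - ⨍ z in a..b, f z) = 0 := by
  rw [intervalIntegral.intervalIntegral_eq_integral_uIoc,
    setAverage_sub_setAverage (by simp [uIoc]), smul_zero]

theorem lipschitzOnWith_intervalAverage {X : Type*} [PseudoMetricSpace X] {s : Set X}
    {f : X → ℝ → E} {a b : ℝ} {K : ℝ≥0}
    (hint : ∀ x ∈ s, IntervalIntegrable (f x) volume a b)
    (hlip : ∀ z ∈ uIoc a b, LipschitzOnWith K (f · z) s) :
    LipschitzOnWith K (fun x => ⨍ z in a..b, f x z) s := by
  refine LipschitzOnWith.of_dist_le_mul fun x hx y hy => ?_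
  rw [dist_eq_norm, ← intervalAverage_sub (hint x hx) (hint y hy)]
  exact norm_intervalAverage_le_of_norm_le_const (by positivity) fun z hz =>
    dist_eq_norm (f x z) (f y z) ▸ (hlip z hz).dist_le_mul x hx y hy

end Average

section Diagonal

theorem continuousOn_diagonal {X Y : Type*} [PseudoEMetricSpace X] [PseudoEMetricSpace Y]
    {f : X → X → Y} {s : Set X} {K : ℝ≥0} (hcont : ∀ x ∈ s, ContinuousOn (f x) s)
    (hlip : ∀ z ∈ s, LipschitzOnWith K (f · z) s) : ContinuousOn (fun x => f x x) s :=
  (continuousOn_prod_of_continuousOn_lipschitzOnWith (fun p : X × X => f p.1 p.2) K hcont hlip).comp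
    (continuous_id.prodMk continuous_id).continuousOn fun _ hx => ⟨hx, hx⟩

variable {E : Type*} [NormedAddCommGroup E] [NormedSpace ℝ E]

theorem norm_integral_le_of_norm_integral_window_le {F : ℝ → E} {a b P C δ : ℝ} (hab : a ≤ b)
    (hP : 0 < P) (hδ : 0 ≤ δ) (hF : IntervalIntegrable F volume a b)
    (hC : ∀ y ∈ Icc a b, ‖F y‖ ≤ C)
    (hwindow : ∀ c, a ≤ c → c + P ≤ b → ‖∫ y in c..(c + P), F y‖ ≤ δ * P) :
    ‖∫ y in a..b, F y‖ ≤ δ * (b - a) + C * P := by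
  have hC₀ : 0 ≤ C := (norm_nonneg _).trans (hC a (left_mem_Icc.2 hab))
  obtain ⟨n, hn⟩ : ∃ n : ℕ, b ≤ a + (n + 1) * P := by
    obtain ⟨n, hn⟩ := exists_nat_ge ((b - a) / P)
    exact ⟨n, by linarith [(div_le_iff₀ hP).1 hn]⟩
  induction n generalizing a with
  | zero =>
    have hba : b - a ≤ P := by simpa [add_comm] using hn
    calc ‖∫ y in a..b, F y‖ ≤ C * |b - a| :=
          intervalIntegral.norm_integral_le_of_norm_le_const fun y hy =>
            hC y (Ioc_subset_Icc_self (uIoc_of_le hab ▸ hy))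
      _ ≤ C * P := by rw [abs_of_nonneg (sub_nonneg.2 hab)]; gcongr
      _ ≤ δ * (b - a) + C * P :=
          le_add_of_nonneg_left (mul_nonneg hδ (sub_nonneg.2 hab))
  | succ n ih =>
    rcases le_total b (a + P) with hshort | hlong
    · exact ih hab hF hC hwindow (hshort.trans (by nlinarith [n.cast_nonneg (α := ℝ)]))
    have haP : a ≤ a + P := le_add_of_nonneg_right hP.le
    have hmem : a + P ∈ uIcc a b := uIcc_of_le hab ▸ ⟨haP, hlong⟩
    have hfirst := hF.mono_set (uIcc_subset_uIcc_left hmem)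
    have hrest := hF.mono_set (uIcc_subset_uIcc_right hmem)
    have ih_rest : ‖∫ y in (a + P)..b, F y‖ ≤ δ * (b - (a + P)) + C * P :=
      ih hlong hrest (fun y hy => hC y ⟨haP.trans hy.1, hy.2⟩)
        (fun c hc => hwindow c (haP.trans hc)) (by push_cast at hn; linarith)
    calc ‖∫ y in a..b, F y‖
        = ‖(∫ y in a..(a + P), F y) + ∫ y in (a + P)..b, F y‖ := by
          rw [intervalIntegral.integral_add_adjacent_intervals hfirst hrest]
      _ ≤ δ * P + (δ * (b - (a + P)) + C * P) :=
          norm_add_le_of_le (hwindow a le_rfl hlong) ih_rest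
      _ = δ * (b - a) + C * P := by ring

variable {f : ℝ → ℝ → E} {a b P : ℝ} {K : ℝ≥0}

theorem norm_integral_diagonal_le_of_integral_eq_zero {c : ℝ} (hP : 0 ≤ P)
    (hlip : ∀ z ∈ Icc c (c + P), LipschitzOnWith K (f · z) (Icc c (c + P)))
    (hdiag : IntervalIntegrable (fun y => f y y) volume c (c + P))
    (hint : IntervalIntegrable (f c) volume c (c + P))
    (hzero : ∫ z in c..(c + P), f c z = 0) :
    ‖∫ y in c..(c + P), f y y‖ ≤ K * P * P := by
  have hcP : c ≤ c + P := le_add_of_nonneg_right hP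
  have hdev : ∀ y ∈ uIoc c (c + P), ‖f y y - f c y‖ ≤ K * P := fun y hy => by
    rw [uIoc_of_le hcP] at hy
    calc ‖f y y - f c y‖ ≤ K * ‖y - c‖ :=
          (hlip y (Ioc_subset_Icc_self hy)).norm_sub_le (Ioc_subset_Icc_self hy)
            (left_mem_Icc.2 hcP)
      _ ≤ K * P := by
          rw [Real.norm_of_nonneg (sub_nonneg.2 hy.1.le)]
          gcongr
          linarith [hy.2]
  calc ‖∫ y in c..(c + P), f y y‖ = ‖∫ y in c..(c + P), (f y y - f c y)‖ := by
        rw [intervalIntegral.integral_sub hdiag hint, hzero, sub_zero]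
    _ ≤ K * P * |c + P - c| := intervalIntegral.norm_integral_le_of_norm_le_const hdev
    _ = K * P * P := by rw [add_sub_cancel_left, abs_of_nonneg hP]

theorem norm_integral_diagonal_le_of_periodic {C : ℝ} (hab : a ≤ b) (hP : 0 < P)
    (hcont : ∀ y ∈ Icc a b, Continuous (f y))
    (hlip : ∀ z, LipschitzOnWith K (f · z) (Icc a b))
    (hper : ∀ y ∈ Icc a b, Function.Periodic (f y) P)
    (hzero : ∀ y ∈ Icc a b, ∫ z in 0..P, f y z = 0)
    (hC : ∀ y ∈ Icc a b, ‖f y y‖ ≤ C) :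
    ‖∫ y in a..b, f y y‖ ≤ K * P * (b - a) + C * P := by
  have hdiag : ContinuousOn (fun y => f y y) (Icc a b) :=
    continuousOn_diagonal (fun y hy => (hcont y hy).continuousOn) fun z _ => hlip z
  refine norm_integral_le_of_norm_integral_window_le hab hP (by positivity)
    (hdiag.intervalIntegrable_of_Icc hab) hC fun c hac hcb => ?_
  have hcP : c ≤ c + P := le_add_of_nonneg_right hP.le
  have hc : c ∈ Icc a b := ⟨hac, hcP.trans hcb⟩
  have hwindow : Icc c (c + P) ⊆ Icc a b := Icc_subset_Icc hac hcb
  refine norm_integral_diagonal_le_of_integral_eq_zero hP.le (fun z _ => (hlip z).mono hwindow)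
    ((hdiag.mono hwindow).intervalIntegrable_of_Icc hcP) ((hcont c hc).intervalIntegrable _ _) ?_
  rw [(hper c hc).intervalIntegral_add_eq c 0, zero_add, hzero c hc]

end Diagonal

theorem stmt3_general {E : Type*} [NormedAddCommGroup E] [NormedSpace ℝ E] [CompleteSpace E]
    {g : ℝ → ℝ → E} {a b T C : ℝ} {K : ℝ≥0} (hT : 0 < T)
    (hcont : ∀ x ∈ Icc a b, Continuous (g x))
    (hper : ∀ x ∈ Icc a b, Function.Periodic (g x) T)
    (hlip : ∀ z, LipschitzOnWith K (g · z) (Icc a b))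
    (hC : ∀ x ∈ Icc a b, ∀ z, ‖g x z‖ ≤ C) :
    ∀ x ∈ Icc a b, ∀ ε > (0 : ℝ),
      ‖∫ y in a..x, (g y (y / ε) - ⨍ z in 0..T, g y z)‖ ≤ 2 * ε * T * (C + K * (b - a)) := by
  intro x hx ε hε
  have hax : Icc a x ⊆ Icc a b := Icc_subset_Icc_right hx.2
  have hlip_avg : LipschitzOnWith K (fun y => ⨍ z in 0..T, g y z) (Icc a b) :=
    lipschitzOnWith_intervalAverage (fun y hy => (hcont y hy).intervalIntegrable _ _)
      fun z _ => hlip z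
  have hzero (y : ℝ) : ∫ z in 0..(T * ε), (g y (z / ε) - ⨍ w in 0..T, g y w) = 0 := by
    rw [intervalIntegral.integral_comp_div (fun z => g y z - ⨍ w in 0..T, g y w) hε.ne',
      zero_div, mul_div_cancel_right₀ T hε.ne', integral_sub_intervalAverage, smul_zero]
  have hbound : ∀ y ∈ Icc a b, ‖g y (y / ε) - ⨍ z in 0..T, g y z‖ ≤ C + C := fun y hy =>
    norm_sub_le_of_le (hC y hy _) (norm_intervalAverage_le_of_norm_le_const
      ((norm_nonneg _).trans (hC y hy 0)) fun z _ => hC y hy z)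
  calc ‖∫ y in a..x, (g y (y / ε) - ⨍ z in 0..T, g y z)‖
      ≤ (K + K : ℝ≥0) * (T * ε) * (x - a) + (C + C) * (T * ε) :=
        norm_integral_diagonal_le_of_periodic
          (f := fun y z => g y (z / ε) - ⨍ w in 0..T, g y w) hx.1 (mul_pos hT hε)
          (fun y hy => ((hcont y (hax hy)).comp (continuous_id.div_const ε)).sub continuous_const)
          (fun z => ((hlip (z / ε)).sub hlip_avg).mono hax)
          (fun y hy => ((hper y (hax hy)).div_const ε).comp (· - ⨍ w in 0..T, g y w))
          (fun y _ => hzero y) (fun y hy => hbound y (hax hy))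
    _ ≤ (K + K : ℝ≥0) * (T * ε) * (b - a) + (C + C) * (T * ε) := by
        gcongr
        exact hx.2
    _ = 2 * ε * T * (C + K * (b - a)) := by push_cast; ring

theorem stmt3 {n : ℕ} (g g' : ℝ → ℝ → EuclideanSpace ℝ (Fin n))
    (hg : ContinuousOn (fun p : ℝ × ℝ => g p.1 p.2) (Icc 0 1 ×ˢ (univ : Set ℝ)))
    (hper : ∀ x ∈ Icc (0:ℝ) 1, ∀ y : ℝ, g x (y + 1) = g x y)
    (hderiv : ∀ x ∈ Icc (0:ℝ) 1, ∀ y : ℝ,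
      HasDerivWithinAt (fun t => g t y) (g' x y) (Icc 0 1) x)
    (hg'cont : ContinuousOn (fun p : ℝ × ℝ => g' p.1 p.2) (Icc 0 1 ×ˢ (univ : Set ℝ)))
    (C C' : ℝ)
    (hC : ∀ x ∈ Icc (0:ℝ) 1, ∀ y : ℝ, ‖g x y‖ ≤ C)
    (hC' : ∀ x ∈ Icc (0:ℝ) 1, ∀ y : ℝ, ‖g' x y‖ ≤ C') :
    ∀ x ∈ Icc (0:ℝ) 1, ∀ ε > (0:ℝ),
      ‖∫ y in (0:ℝ)..x, (g y (y / ε) - ∫ z in (0:ℝ)..1, g y z)‖ ≤ 2 * ε * (C + C') := by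
  lift C' to ℝ≥0 using (norm_nonneg _).trans (hC' 0 (by simp) 0)
  simpa only [interval_average_eq, sub_zero, inv_one, one_smul, mul_one] using
    stmt3_general one_pos (fun x hx => continuousOn_univ.1 (hg.uncurry_left x hx)) hper
      (fun y => (convex_Icc 0 1).lipschitzOnWith_of_nnnorm_hasDerivWithin_le
        (hderiv · · y) (hC' · · y)) hC
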